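/- Let R be a ring containing a (possibly skew) field K as a subring with the same unit element, and let F := ⋂_{a ∈ R*} a⁻¹Ka (a subfield of R). Then the intersection of all K-chains containing the three mutually distant points R(1,0), R(0,1), R(1,1) equals {R(1,0)} ∪ {R(f,1) : f ∈ F}. -/

import Mathlib

/-!
The argument compares chains with the particular chains `C_a = C₀ · diag(a, a)`, `a ∈ R*`. The
points of `C_a` are `R(1,0)` and `R(a⁻¹ka, 1)`, `k ∈ K`, and `R(x,1)` determines `x`; hence a point
lying on all the `C_a` is `R(1,0)` or some `R(x,1)` with `x ∈ F`.

Conversely let `C = C₀γ` pass through the three points, say `kγ = u(1,0)`, `lγ = v(0,1)` and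
`mγ = w(1,1)` with `k, l, m ∈ K²`. Then `u, v, w` are units (`exists_unit_of_span_eq`), so `k, l` are
linearly independent over `K` and `m = sk + tl` for some `s, t ∈ K`, whence `f(s)u = w = f(t)v`.
For `x = w⁻¹f(c)w` the vector `n = csk + tl` satisfies `nγ = (f(c)w, w) = w(x, 1)`, so `R(x,1)` is on
`C`. Admissibility over the field `K` means being nonzero (`admissible_iff`), and a zero ring `R`
is treated separately because `f` is injective only for `R ≠ 0`.
-/


/-- A pair `(a,b) ∈ R²` is admissible if it is the first row of an invertible 2×2 matrix. -/
def Admissible (R : Type*) [Ring R] (a b : R) : Prop :=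
  ∃ γ : (Matrix (Fin 2) (Fin 2) R)ˣ, γ.val 0 0 = a ∧ γ.val 0 1 = b

/-- The projective line over `R`: cyclic left submodules `R(a,b)` with `(a,b)` admissible. -/
def ProjPoint (R : Type*) [Ring R] : Set (Submodule R (R × R)) :=
  {p | ∃ a b : R, Admissible R a b ∧ p = Submodule.span R {(a, b)}}

/-- Two points are distant if some admissible representatives of them are the two rows of an
invertible 2×2 matrix. -/
def Distant (R : Type*) [Ring R] (p q : Submodule R (R × R)) : Prop :=
  ∃ γ : (Matrix (Fin 2) (Fin 2) R)ˣ,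
    p = Submodule.span R {(γ.val 0 0, γ.val 0 1)} ∧
    q = Submodule.span R {(γ.val 1 0, γ.val 1 1)}

/-- Right multiplication of a row vector by a matrix, as a left `R`-linear map. -/
def rowMul (R : Type*) [Ring R] (γ : Matrix (Fin 2) (Fin 2) R) : (R × R) →ₗ[R] (R × R) where
  toFun v := (v.1 * γ 0 0 + v.2 * γ 1 0, v.1 * γ 0 1 + v.2 * γ 1 1)
  map_add' x y := by
    simp only [Prod.fst_add, Prod.snd_add, add_mul, Prod.mk_add_mk, Prod.mk.injEq]
    constructor <;> abel
  map_smul' c v := by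
    simp only [Prod.smul_fst, Prod.smul_snd, smul_eq_mul, RingHom.id_apply, Prod.smul_mk,
      mul_add, mul_assoc]

/-- The action of `GL₂(R)` on the projective line: `R(a,b)·γ = R((a,b)·γ)`. -/
def ptAct (R : Type*) [Ring R] (γ : (Matrix (Fin 2) (Fin 2) R)ˣ)
    (p : Submodule R (R × R)) : Submodule R (R × R) :=
  p.map (rowMul R γ.val)

/-- The standard chain: image of `P(K)` in `P(R)` under the embedding induced by `f`. -/
def StdChain (K R : Type*) [DivisionRing K] [Ring R] (f : K →+* R) :
    Set (Submodule R (R × R)) :=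
  {p | ∃ a b : K, Admissible K a b ∧ p = Submodule.span R {(f a, f b)}}

/-- A `K`-chain: an image of the standard chain under an element of `GL₂(R)`. -/
def IsKChain (K R : Type*) [DivisionRing K] [Ring R] (f : K →+* R)
    (C : Set (Submodule R (R × R))) : Prop :=
  ∃ γ : (Matrix (Fin 2) (Fin 2) R)ˣ, C = (ptAct R γ) '' StdChain K R f

/-- The subfield `F = ⋂_{a ∈ R*} a⁻¹ K a` of `R`. -/
def Fsub (K R : Type*) [DivisionRing K] [Ring R] (f : K →+* R) : Set R :=
  ⋂ a : Rˣ, (fun x => ((a⁻¹ : Rˣ) : R) * x * (a : R)) '' Set.range f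

theorem admissible_iff (K : Type*) [DivisionRing K] (a b : K) :
    Admissible K a b ↔ (a, b) ≠ 0 := by
  constructor
  · rintro ⟨γ, rfl, rfl⟩ h
    have h1 := congrFun (congrFun γ.mul_inv 0) 0
    rw [Prod.mk_eq_zero] at h
    simp [Matrix.mul_apply, h.1, h.2] at h1
  · intro h
    by_cases ha : a = 0
    · have hb : b ≠ 0 := fun hb => h (by simp [ha, hb])
      refine ⟨⟨!![0, b; 1, 0], !![0, 1; b⁻¹, 0], ?_, ?_⟩, ?_, ?_⟩
      · simp [Matrix.one_fin_two, hb]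
      · simp [Matrix.one_fin_two, hb]
      · simp [ha]
      · simp
    · refine ⟨⟨!![a, b; 0, 1], !![a⁻¹, -(a⁻¹ * b); 0, 1], ?_, ?_⟩, ?_, ?_⟩
      · simp [Matrix.one_fin_two, ha]
      · simp [Matrix.one_fin_two, ha]
      · simp
      · simp

theorem rowMul_mul {R : Type*} [Ring R] (A B : Matrix (Fin 2) (Fin 2) R) (v : R × R) :
    rowMul R (A * B) v = rowMul R B (rowMul R A v) := by
  ext <;> simp [rowMul, Matrix.mul_apply, Fin.sum_univ_two, mul_add, add_mul, mul_assoc] <;> abel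

theorem rowMul_injective {R : Type*} [Ring R] (γ : (Matrix (Fin 2) (Fin 2) R)ˣ) :
    Function.Injective (rowMul R γ.val) := by
  apply Function.LeftInverse.injective (g := rowMul R (γ⁻¹).val)
  intro v
  rw [← rowMul_mul, Units.mul_inv]
  simp [rowMul]

theorem mem_chain_iff {K R : Type*} [DivisionRing K] [Ring R] (f : K →+* R)
    (γ : (Matrix (Fin 2) (Fin 2) R)ˣ) (p : Submodule R (R × R)) :
    p ∈ (ptAct R γ) '' StdChain K R f ↔
      ∃ n : K × K, n ≠ 0 ∧ p = Submodule.span R {rowMul R γ.val (f n.1, f n.2)} := by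
  constructor
  · rintro ⟨_, ⟨a, b, h, rfl⟩, rfl⟩
    exact ⟨(a, b), (admissible_iff K a b).1 h, by
      simp [ptAct, Submodule.map_span]⟩
  · rintro ⟨⟨a, b⟩, h, rfl⟩
    exact ⟨_, ⟨a, b, (admissible_iff K a b).2 h, rfl⟩, by
      simp [ptAct, Submodule.map_span]⟩

/-- Over a general ring two generators of the same cyclic submodule need not differ by a unit.
They do here, because one has a coordinate `1` and the other is the image under `GL₂(R)` of a
nonzero vector of `K²`. -/
theorem exists_unit_of_span_eq {K R : Type*} [DivisionRing K] [Ring R] (f : K →+* R)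
    (γ : (Matrix (Fin 2) (Fin 2) R)ˣ) {n : K × K} (hn : n ≠ 0) {x y : R} (hxy : x = 1 ∨ y = 1)
    (h : Submodule.span R {(x, y)} = Submodule.span R {rowMul R γ.val (f n.1, f n.2)}) :
    ∃ u : Rˣ, rowMul R γ.val (f n.1, f n.2) = ((u : R) * x, (u : R) * y) := by
  have h1 : rowMul R γ.val (f n.1, f n.2) ∈ Submodule.span R {(x, y)} := by
    rw [h]; exact Submodule.mem_span_singleton_self _
  have h2 : (x, y) ∈ Submodule.span R {rowMul R γ.val (f n.1, f n.2)} := by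
    rw [← h]; exact Submodule.mem_span_singleton_self _
  obtain ⟨u, hu⟩ := Submodule.mem_span_singleton.1 h1
  obtain ⟨u', hu'⟩ := Submodule.mem_span_singleton.1 h2
  have e1 : u' * u = 1 := by
    rw [← hu, smul_smul] at hu'
    simp only [Prod.smul_mk, smul_eq_mul, Prod.mk.injEq] at hu'
    rcases hxy with rfl | rfl
    · simpa using hu'.1
    · simpa using hu'.2
  have e2 : u * u' = 1 := by
    rw [← hu', smul_smul, ← map_smul] at hu
    have := rowMul_injective γ hu
    simp only [Prod.smul_mk, smul_eq_mul, Prod.mk.injEq] at this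
    have key : ∀ c : K, c ≠ 0 → u * u' * f c = f c → u * u' = 1 := by
      intro c hc h
      have h3 : f c * f c⁻¹ = 1 := by rw [← map_mul, mul_inv_cancel₀ hc, map_one]
      calc u * u' = u * u' * f c * f c⁻¹ := by rw [mul_assoc _ (f c), h3, mul_one]
        _ = 1 := by rw [h, h3]
    by_cases h0 : n.1 = 0
    · exact key n.2 (fun h' => hn (Prod.ext h0 h')) this.2
    · exact key n.1 h0 this.1
  exact ⟨⟨u, u', e2, e1⟩, hu.symm⟩

theorem span_unit_mul {R : Type*} [Ring R] (u : Rˣ) (x y : R) :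
    Submodule.span R {((u : R) * x, (u : R) * y)} = Submodule.span R {(x, y)} :=
  Submodule.span_singleton_group_smul_eq R u (x, y)

theorem span_mk_one_injective {R : Type*} [Ring R] {x y : R}
    (h : Submodule.span R {(x, (1 : R))} = Submodule.span R {(y, (1 : R))}) : x = y := by
  have h1 : (x, (1 : R)) ∈ Submodule.span R {(y, (1 : R))} := by
    rw [← h]; exact Submodule.mem_span_singleton_self _
  obtain ⟨c, hc⟩ := Submodule.mem_span_singleton.1 h1
  simp only [Prod.smul_mk, smul_eq_mul, Prod.mk.injEq, mul_one] at hc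
  rw [← hc.1, hc.2, one_mul]

/-- The invertible matrix `diag(a, a)`; it acts on points by `R(x,y) ↦ R(xa,ya)`, in general nontrivially. -/
def diagUnit {R : Type*} [Ring R] (a : Rˣ) : (Matrix (Fin 2) (Fin 2) R)ˣ :=
  ⟨!![(a : R), 0; 0, (a : R)], !![((a⁻¹ : Rˣ) : R), 0; 0, ((a⁻¹ : Rˣ) : R)],
    by simp [Matrix.one_fin_two], by simp [Matrix.one_fin_two]⟩

theorem rowMul_diagUnit {R : Type*} [Ring R] (a : Rˣ) (x y : R) :
    rowMul R (diagUnit a).val (x, y) = (x * a, y * a) := by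
  simp [rowMul, diagUnit]

/-- The points of `C₀ · diag(a, a)` are `R(1,0)` and the `R(a⁻¹ka, 1)` with `k ∈ K`. -/
theorem mem_diag_chain_iff {K R : Type*} [DivisionRing K] [Ring R] (f : K →+* R) (a : Rˣ)
    (p : Submodule R (R × R)) :
    p ∈ (ptAct R (diagUnit a)) '' StdChain K R f ↔
      p = Submodule.span R {((1, 0) : R × R)} ∨
        ∃ k : K, p = Submodule.span R {(((a⁻¹ : Rˣ) : R) * f k * a, (1 : R))} := by
  rw [mem_chain_iff]
  constructor
  · rintro ⟨⟨x, y⟩, hn, rfl⟩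
    simp only [rowMul_diagUnit]
    by_cases hy : y = 0
    · left
      have hx : x ≠ 0 := fun hx => hn (by simp [hx, hy])
      rw [← span_unit_mul (Units.map f.toMonoidHom (Units.mk0 x hx) * a) 1 0]
      simp [hy]
    · right
      refine ⟨y⁻¹ * x, ?_⟩
      rw [← span_unit_mul (Units.map f.toMonoidHom (Units.mk0 y hy) * a) _ 1]
      have e : ∀ r : R, f y * (f y⁻¹ * r) = r := by
        intro r
        rw [← mul_assoc, ← map_mul, mul_inv_cancel₀ hy, map_one, one_mul]
      simp [mul_assoc, e]
  · rintro (rfl | ⟨k, rfl⟩)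
    · refine ⟨(1, 0), by simp, ?_⟩
      rw [rowMul_diagUnit, ← span_unit_mul a 1 0]
      simp
    · refine ⟨(k, 1), by simp, ?_⟩
      rw [rowMul_diagUnit, ← span_unit_mul a _ 1]
      simp [mul_assoc]

/-- Every chain through `R(1,0)`, `R(0,1)`, `R(1,1)` contains the points `R(x,1)` with `x ∈ F`. -/
theorem span_mk_one_mem_chain {K R : Type*} [DivisionRing K] [Ring R] [Nontrivial R] (f : K →+* R)
    (γ : (Matrix (Fin 2) (Fin 2) R)ˣ)
    (h1 : Submodule.span R {((1, 0) : R × R)} ∈ (ptAct R γ) '' StdChain K R f)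
    (h2 : Submodule.span R {((0, 1) : R × R)} ∈ (ptAct R γ) '' StdChain K R f)
    (h3 : Submodule.span R {((1, 1) : R × R)} ∈ (ptAct R γ) '' StdChain K R f)
    {x : R} (hx : x ∈ Fsub K R f) :
    Submodule.span R {(x, (1 : R))} ∈ (ptAct R γ) '' StdChain K R f := by
  rw [mem_chain_iff] at h1 h2 h3 ⊢
  obtain ⟨k, hk, h1⟩ := h1
  obtain ⟨l, hl, h2⟩ := h2
  obtain ⟨m, hm, h3⟩ := h3
  obtain ⟨u, hu⟩ := exists_unit_of_span_eq f γ hk (Or.inl rfl) h1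
  obtain ⟨v, hv⟩ := exists_unit_of_span_eq f γ hl (Or.inr rfl) h2
  obtain ⟨w, hw⟩ := exists_unit_of_span_eq f γ hm (Or.inl rfl) h3
  simp only [mul_one, mul_zero] at hu hv hw
  have comb : ∀ s t : K, rowMul R γ.val (f (s • k + t • l).1, f (s • k + t • l).2) =
      (f s * u, f t * v) := by
    intro s t
    have : (f (s • k + t • l).1, f (s • k + t • l).2) =
        f s • (f k.1, f k.2) + f t • (f l.1, f l.2) := by
      ext <;> simp
    rw [this, map_add, map_smul, map_smul, hu, hv]
    simp
  -- A relation `sk + tl = 0` is carried by `γ` to `(f(s)u, f(t)v) = 0`, with `u` and `v` units.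
  have hli : LinearIndependent K ![k, l] := by
    rw [LinearIndependent.pair_iff]
    intro s t hst
    have := comb s t
    rw [hst] at this
    have h0 : rowMul R γ.val (f (0 : K × K).1, f (0 : K × K).2) = 0 := by
      simp [rowMul]
    rw [h0] at this
    simpa [Prod.ext_iff] using this.symm
  have htop := hli.span_eq_top_of_card_eq_finrank (by simp)
  have hm' : m ∈ Submodule.span K (Set.range ![k, l]) := by rw [htop]; trivial
  rw [Matrix.range_cons, Matrix.range_cons, Matrix.range_empty, Set.union_empty,
    Set.singleton_union, Submodule.mem_span_pair] at hm'
  obtain ⟨s, t, rfl⟩ := hm'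
  rw [comb] at hw
  simp only [Prod.mk.injEq] at hw
  obtain ⟨_, ⟨c, rfl⟩, rfl⟩ := Set.mem_iInter.1 hx w
  have hn := comb (c * s) t
  rw [map_mul, mul_assoc, hw.1, hw.2] at hn
  refine ⟨(c * s) • k + t • l, ?_, ?_⟩
  · intro h
    rw [h] at hn
    simp [rowMul] at hn
    exact w.ne_zero hn.2.symm
  · rw [hn, ← span_unit_mul w _ 1]
    simp [mul_assoc]

/-- The intersection of all chains through `R(1,0)`, `R(0,1)`, `R(1,1)` is the `F`-chain
`{R(1,0)} ∪ {R(f,1) : f ∈ F}`. -/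
theorem stmt_13 {K R : Type*} [DivisionRing K] [Ring R] (f : K →+* R) :
    ⋂₀ {C : Set (Submodule R (R × R)) | IsKChain K R f C ∧
        Submodule.span R {((1, 0) : R × R)} ∈ C ∧
        Submodule.span R {((0, 1) : R × R)} ∈ C ∧
        Submodule.span R {((1, 1) : R × R)} ∈ C} =
      {Submodule.span R {((1, 0) : R × R)}} ∪
        {p | ∃ x ∈ Fsub K R f, p = Submodule.span R {((x, 1) : R × R)}} := by
  rcases subsingleton_or_nontrivial R with hR | hR
  · ext p
    simp only [Subsingleton.elim p (Submodule.span R {((1, 0) : R × R)}), Set.mem_sInter,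
      Set.mem_ofPred_eq, Set.mem_union, Set.mem_singleton_iff, true_or, iff_true]
    exact fun C hC => hC.2.1
  apply Set.Subset.antisymm
  · intro p hp
    have hp' : ∀ a : Rˣ, p ∈ (ptAct R (diagUnit a)) '' StdChain K R f := by
      intro a
      refine hp _ ⟨⟨_, rfl⟩, ?_, ?_, ?_⟩
      · exact (mem_diag_chain_iff f a _).2 (Or.inl rfl)
      · exact (mem_diag_chain_iff f a _).2 (Or.inr ⟨0, by simp⟩)
      · exact (mem_diag_chain_iff f a _).2 (Or.inr ⟨1, by simp⟩)
    simp only [mem_diag_chain_iff] at hp'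
    by_cases h0 : p = Submodule.span R {((1, 0) : R × R)}
    · exact Or.inl h0
    · right
      -- The chain for `a = 1` writes the point as `R(x,1)`; the others show `x ∈ a⁻¹Ka`.
      obtain ⟨k, hk⟩ := (hp' 1).resolve_left h0
      refine ⟨_, Set.mem_iInter.2 fun a => ?_, hk⟩
      obtain ⟨j, hj⟩ := (hp' a).resolve_left h0
      exact ⟨f j, ⟨j, rfl⟩, span_mk_one_injective (hj.symm.trans hk)⟩
  · rintro p (rfl | ⟨x, hx, rfl⟩) C ⟨⟨γ, rfl⟩, h1, h2, h3⟩
    · exact h1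
    · exact span_mk_one_mem_chain f γ h1 h2 h3 hx
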